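/- Let E ∈ GL_d(ℂ) with d > 2 be such that the solutions q of q² + tr(EᵀE⁻¹)q + 1 = 0 are generic (q = ±1 or not a root of unity), so that the quantum automorphism group B(E) of the bilinear form E is cosemisimple. Then GKdim B(E) = ∞. -/

import Mathlib

/-!
Background definitions: comodules over a Hopf algebra, simple comodules, direct
summands, supports, subcoalgebras, cosemisimplicity, Gelfand-Kirillov dimension,
and (measured) Grothendieck semirings of cosemisimple Hopf algebras.
-/

open TensorProduct

/-- The data of a coaction of a Hopf algebra `H` on a `k`-vector space `X`:
a linear map `ρ : X → X ⊗ H`.  The comodule axioms are recorded separately in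
`Comod.IsComodule`. -/
structure Comod (k : Type) [Field k] (H : Type) [Ring H] [HopfAlgebra k H] : Type 1 where
  X : Type
  [addCommGroup : AddCommGroup X]
  [module : Module k X]
  ρ : X →ₗ[k] X ⊗[k] H

attribute [instance] Comod.addCommGroup Comod.module

namespace Comod

variable {k : Type} [Field k] {H : Type} [Ring H] [HopfAlgebra k H]

/-- The trivial `H`-comodule `𝟏`, i.e. `k` with coaction `x ↦ x ⊗ 1`. -/
noncomputable def unit (k : Type) [Field k] (H : Type) [Ring H] [HopfAlgebra k H] :
    Comod k H where
  X := k
  ρ := (TensorProduct.mk k k H).flip 1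

/-- The regular comodule: `H` coacting on itself by comultiplication. -/
noncomputable def regular (k : Type) [Field k] (H : Type) [Ring H] [HopfAlgebra k H] :
    Comod k H where
  X := H
  ρ := Coalgebra.comul

/-- Tensor product of comodules: the coaction on `M ⊗ N` is
`(id ⊗ id ⊗ μ_H) ∘ (id ⊗ τ ⊗ id) ∘ (ρ_M ⊗ ρ_N)`. -/
noncomputable def tensor (M N : Comod k H) : Comod k H where
  X := M.X ⊗[k] N.X
  ρ := (LinearMap.mul' k H).lTensor (M.X ⊗[k] N.X)
        ∘ₗ (TensorProduct.tensorTensorTensorComm k M.X H N.X H).toLinearMap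
        ∘ₗ TensorProduct.map M.ρ N.ρ

/-- Binary direct sum of comodules. -/
noncomputable def dsum (M N : Comod k H) : Comod k H where
  X := M.X × N.X
  ρ := (LinearMap.inl k M.X N.X).rTensor H ∘ₗ M.ρ ∘ₗ LinearMap.fst k M.X N.X
     + (LinearMap.inr k M.X N.X).rTensor H ∘ₗ N.ρ ∘ₗ LinearMap.snd k M.X N.X

/-- Finite direct sum of a family of comodules. -/
noncomputable def pi {ι : Type} [Fintype ι] (S : ι → Comod k H) : Comod k H where
  X := ∀ i, (S i).X
  ρ := letI := Classical.decEq ι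
    ∑ i : ι, (LinearMap.single k (fun j => (S j).X) i).rTensor H ∘ₗ (S i).ρ
        ∘ₗ LinearMap.proj i

/-- `n`-th tensor power of a comodule (`M^{⊗0} = 𝟏`, `M^{⊗1} = M`). -/
noncomputable def tpow (M : Comod k H) : ℕ → Comod k H
  | 0 => unit k H
  | 1 => M
  | n + 2 => (M.tpow (n + 1)).tensor M

/-- A linear map is a map of comodules if it intertwines the coactions. -/
def IsHom (M N : Comod k H) (f : M.X →ₗ[k] N.X) : Prop :=
  N.ρ ∘ₗ f = f.rTensor H ∘ₗ M.ρ

/-- Isomorphism of comodules. -/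
def Iso (M N : Comod k H) : Prop :=
  ∃ e : M.X ≃ₗ[k] N.X, IsHom M N e.toLinearMap

/-- The comodule axioms (coassociativity and counitality) for a coaction. -/
def IsComodule (M : Comod k H) : Prop :=
  (M.ρ.rTensor H ∘ₗ M.ρ =
      (TensorProduct.assoc k M.X H H).symm.toLinearMap
        ∘ₗ (Coalgebra.comul (R := k) (A := H)).lTensor M.X ∘ₗ M.ρ) ∧
  (TensorProduct.rid k M.X).toLinearMap
      ∘ₗ (Coalgebra.counit (R := k) (A := H)).lTensor M.X ∘ₗ M.ρ = LinearMap.id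

/-- A subspace `N ⊆ M` is a subcomodule if the coaction restricts to `N ⊗ H`. -/
def IsSubcomodule (M : Comod k H) (N : Submodule k M.X) : Prop :=
  ∀ x ∈ N, M.ρ x ∈ LinearMap.range (N.subtype.rTensor H)

/-- Simple (hence finite-dimensional) comodules. -/
def IsSimple (M : Comod k H) : Prop :=
  M.IsComodule ∧ Nontrivial M.X ∧ FiniteDimensional k M.X ∧
    ∀ N : Submodule k M.X, M.IsSubcomodule N → N = ⊥ ∨ N = ⊤

/-- `S` is a direct summand of `M` (as comodules): the inclusion splits. -/
def DirectSummand (S M : Comod k H) : Prop :=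
  ∃ (i : S.X →ₗ[k] M.X) (p : M.X →ₗ[k] S.X),
    IsHom S M i ∧ IsHom M S p ∧ p ∘ₗ i = LinearMap.id

/-- `C` is the support of the comodule `M`: the (unique) minimal subspace
`C ⊆ H` with `ρ(M) ⊆ M ⊗ C`. -/
def IsSupport (M : Comod k H) (C : Submodule k H) : Prop :=
  (∀ x : M.X, M.ρ x ∈ LinearMap.range (C.subtype.lTensor M.X)) ∧
    ∀ C' : Submodule k H,
      (∀ x : M.X, M.ρ x ∈ LinearMap.range (C'.subtype.lTensor M.X)) → C ≤ C'

end Comod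

/-- A subspace `C ⊆ H` is a subcoalgebra if `Δ(C) ⊆ C ⊗ C`. -/
def IsSubcoalgebra (k : Type) [Field k] (H : Type) [Ring H] [HopfAlgebra k H]
    (C : Submodule k H) : Prop :=
  ∀ x ∈ C, Coalgebra.comul (R := k) x ∈
    LinearMap.range (TensorProduct.map C.subtype C.subtype)

/-- A simple subcoalgebra: a nonzero subcoalgebra with no proper nonzero
subcoalgebras. -/
def IsSimpleSubcoalgebra (k : Type) [Field k] (H : Type) [Ring H] [HopfAlgebra k H]
    (C : Submodule k H) : Prop :=
  IsSubcoalgebra k H C ∧ C ≠ ⊥ ∧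
    ∀ D : Submodule k H, D ≤ C → IsSubcoalgebra k H D → D = ⊥ ∨ D = C

/-- A Hopf algebra is cosemisimple if every subcomodule of every comodule is a
direct summand. -/
def IsCosemisimple (k : Type) [Field k] (H : Type) [Ring H] [HopfAlgebra k H] : Prop :=
  ∀ M : Comod k H, M.IsComodule →
    ∀ N : Submodule k M.X, M.IsSubcomodule N →
      ∃ N' : Submodule k M.X, M.IsSubcomodule N' ∧ IsCompl N N'

open scoped ENNReal in
/-- The Gelfand-Kirillov dimension of a `k`-algebra `A`:
`sup_V limsup_n log(dim V^n)/log n` over finite-dimensional subspaces `V ⊆ A`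
(for a finitely generated algebra this agrees with the value computed from any
finite-dimensional generating subspace containing `1`). -/
noncomputable def GKdim (k : Type) (A : Type) [Field k] [Ring A] [Algebra k A] : ℝ≥0∞ :=
  ⨆ (V : Submodule k A) (_ : FiniteDimensional k V),
    Filter.limsup
      (fun n : ℕ => ENNReal.ofReal
        (Real.log (Module.finrank k ↥(V ^ n)) / Real.log n)) Filter.atTop

/-- The (measured) Grothendieck semiring of a cosemisimple Hopf algebra `H`:
a commutative semiring `R` together with a class map `cls` on finite-dimensional
`H`-comodules which is constant on isomorphism classes, additive on direct sums,
multiplicative on tensor products, sends `𝟏` to `1`, and induces a bijection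
between iso-classes of finite-dimensional comodules and elements of `R`.
The dimension function `d_H` on `R_+(H)` is recovered as `cls M ↦ dim_k M`. -/
structure GrSemiring (k : Type) [Field k] (H : Type) [Ring H] [HopfAlgebra k H] :
    Type 1 where
  R : Type
  [commSemiring : CommSemiring R]
  cls : Comod k H → R
  cls_one : cls (Comod.unit k H) = 1
  cls_iso : ∀ M N : Comod k H, M.IsComodule → N.IsComodule →
    FiniteDimensional k M.X → FiniteDimensional k N.X → Comod.Iso M N → cls M = cls N
  cls_dsum : ∀ M N : Comod k H, M.IsComodule → N.IsComodule →
    FiniteDimensional k M.X → FiniteDimensional k N.X →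
      cls (M.dsum N) = cls M + cls N
  cls_tensor : ∀ M N : Comod k H, M.IsComodule → N.IsComodule →
    FiniteDimensional k M.X → FiniteDimensional k N.X →
      cls (M.tensor N) = cls M * cls N
  cls_surj : ∀ r : R, ∃ M : Comod k H, M.IsComodule ∧ FiniteDimensional k M.X ∧ cls M = r
  cls_inj : ∀ M N : Comod k H, M.IsComodule → N.IsComodule →
    FiniteDimensional k M.X → FiniteDimensional k N.X → cls M = cls N → Comod.Iso M N

attribute [instance] GrSemiring.commSemiring

/-!
The coefficient space `C(M) ⊆ H` of a comodule `M` is submultiplicative,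
`C(M ⊗ N) ⊆ C(M) C(N)`, it shrinks under passing to quotients, and a simple `M` embeds into it.
Since `S (n + 2)` is a quotient of `S 1 ⊗ S (n + 1)`, the space `C(S 1) ^ n` contains `C(S n)`, so
its dimension is at least `dim S n`. The fusion rule makes these dimensions satisfy
`dim S (n + 2) = dim S 1 * dim S (n + 1) - dim S n`, so that they are at least `(dim S 1 - 1) ^ n`.
The powers of `C(S 1)` thus grow exponentially once `dim S 1 > 2`.
-/

section Growth

open Filter Topology

theorem mul_le_succ_of_add_eq_succ_mul {a : ℕ → ℕ} {c : ℕ} (h₀ : c * a 0 ≤ a 1)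
    (hrec : ∀ n, a (n + 2) + a n = (c + 1) * a (n + 1)) (n : ℕ) : c * a n ≤ a (n + 1) := by
  obtain rfl | hc := c.eq_zero_or_pos
  · simp
  induction n with
  | zero => exact h₀
  | succ n ih =>
    have hmono : a n ≤ a (n + 1) := (Nat.le_mul_of_pos_left _ hc).trans ih
    linarith [hrec n]

theorem pow_mul_le_of_mul_le_succ {a : ℕ → ℕ} {c : ℕ} (h : ∀ n, c * a n ≤ a (n + 1)) (n : ℕ) :
    c ^ n * a 0 ≤ a n := by
  exact_mod_cast geom_le (u := fun n => (a n : ℝ)) c.cast_nonneg n fun n _ => by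
    exact_mod_cast h n

theorem tendsto_natCast_div_log_atTop :
    Tendsto (fun n : ℕ => (n : ℝ) / Real.log n) atTop atTop := by
  have hlog : Tendsto (fun x : ℝ => Real.log x / x) atTop (𝓝[>] 0) := by
    refine tendsto_nhdsWithin_iff.2 ⟨Real.isLittleO_log_id_atTop.tendsto_div_nhds_zero, ?_⟩
    filter_upwards [eventually_gt_atTop 1] with x hx
    exact div_pos (Real.log_pos hx) (zero_lt_one.trans hx)
  have hinv : Tendsto (fun x : ℝ => x / Real.log x) atTop atTop :=
    hlog.inv_tendsto_nhdsGT_zero.congr fun x => inv_div _ _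
  exact hinv.comp tendsto_natCast_atTop_atTop

theorem tendsto_log_div_log_atTop_of_pow_le {a : ℕ → ℝ} {c : ℝ} (hc : 1 < c)
    (h : ∀ᶠ n in atTop, c ^ n ≤ a n) :
    Tendsto (fun n : ℕ => Real.log (a n) / Real.log n) atTop atTop := by
  refine tendsto_atTop_mono' _ ?_
    (tendsto_natCast_div_log_atTop.const_mul_atTop (Real.log_pos hc))
  filter_upwards [h] with n hn
  calc Real.log c * (n / Real.log n) = Real.log (c ^ n) / Real.log n := by
        rw [Real.log_pow]; ring
    _ ≤ Real.log (a n) / Real.log n := by gcongr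

theorem GKdim_eq_top_of_pow_le {k A : Type} [Field k] [Ring A] [Algebra k A]
    (V : Submodule k A) [FiniteDimensional k V] {c : ℝ} (hc : 1 < c)
    (h : ∀ᶠ n in atTop, c ^ n ≤ Module.finrank k ↥(V ^ n)) : GKdim k A = ⊤ := by
  refine eq_top_iff.2 (le_iSup₂_of_le V ‹_› ?_)
  exact (ENNReal.tendsto_ofReal_nhds_top.2
    (tendsto_log_div_log_atTop_of_pow_le hc h)).limsup_eq.ge

end Growth

namespace Comod

open Module LinearMap

variable {k : Type} [Field k] {H : Type} [Ring H] [HopfAlgebra k H]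

section Hom

theorem IsHom.apply {M N : Comod k H} {f : M.X →ₗ[k] N.X} (hf : IsHom M N f) (x : M.X) :
    N.ρ (f x) = f.rTensor H (M.ρ x) :=
  LinearMap.congr_fun hf x

theorem IsHom.comp {M N P : Comod k H} {g : N.X →ₗ[k] P.X} {f : M.X →ₗ[k] N.X}
    (hg : IsHom N P g) (hf : IsHom M N f) : IsHom M P (g ∘ₗ f) := by
  ext x
  simp only [comp_apply, hg.apply, hf.apply, rTensor_comp]

theorem isHom_fst (M N : Comod k H) : IsHom (M.dsum N) M (fst k M.X N.X) := by
  refine LinearMap.ext fun ⟨x, y⟩ => ?_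
  change M.ρ x = (fst k M.X N.X).rTensor H
    ((inl k M.X N.X).rTensor H (M.ρ x) + (inr k M.X N.X).rTensor H (N.ρ y))
  rw [map_add, ← rTensor_comp_apply, ← rTensor_comp_apply, fst_comp_inl, fst_comp_inr,
    rTensor_id_apply, rTensor_zero, LinearMap.zero_apply, add_zero]

theorem IsHom.isSubcomodule_ker {M N : Comod k H} {f : M.X →ₗ[k] N.X} (hf : IsHom M N f) :
    M.IsSubcomodule (ker f) := fun x hx => by
  have hexact := Module.Flat.rTensor_exact H (exact_subtype_ker_map f)
  refine (hexact (M.ρ x)).1 ?_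
  rw [← hf.apply, mem_ker.1 hx, map_zero]

theorem IsHom.injective_of_isSimple {M N : Comod k H} {f : M.X →ₗ[k] N.X} (hf : IsHom M N f)
    (hM : M.IsSimple) (hf0 : f ≠ 0) : Function.Injective f :=
  ker_eq_bot.1 <| (hM.2.2.2 _ hf.isSubcomodule_ker).resolve_right fun h => hf0 (ker_eq_top.1 h)

end Hom

section Dimension

theorem finrank_unit : finrank k (unit k H).X = 1 :=
  finrank_self k

theorem finrank_tensor (M N : Comod k H) :
    finrank k (M.tensor N).X = finrank k M.X * finrank k N.X :=
  finrank_tensorProduct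

theorem finrank_dsum (M N : Comod k H) [FiniteDimensional k M.X] [FiniteDimensional k N.X] :
    finrank k (M.dsum N).X = finrank k M.X + finrank k N.X :=
  finrank_prod

theorem Iso.finrank_eq {M N : Comod k H} (h : Iso M N) : finrank k M.X = finrank k N.X :=
  h.elim fun e _ => e.finrank_eq

end Dimension

section Coefficients

/-- The matrix coefficient `(φ ⊗ id) (ρ x) ∈ H` of a comodule at a functional `φ` and a vector `x`,
as a bilinear map. For fixed `φ` it is a comodule map from `M` to `H`. -/
noncomputable def coeff (M : Comod k H) : Dual k M.X →ₗ[k] M.X →ₗ[k] H :=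
  mk₂ k (fun φ x => TensorProduct.lid k H (φ.rTensor H (M.ρ x)))
    (by simp [rTensor_add]) (by simp [rTensor_smul]) (by simp) (by simp)

/-- The coefficient space `C(M)`, spanned by all matrix coefficients of `M`: an explicit form of the
support of `IsSupport`. Its powers are the subspaces that witness the growth of `H`. -/
noncomputable def coeffSpace (M : Comod k H) : Submodule k H :=
  Submodule.map₂ M.coeff ⊤ ⊤

theorem coeff_apply (M : Comod k H) (φ : Dual k M.X) (x : M.X) :
    M.coeff φ x = TensorProduct.lid k H (φ.rTensor H (M.ρ x)) :=
  rfl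

theorem coeff_mem_coeffSpace (M : Comod k H) (φ : Dual k M.X) (x : M.X) :
    M.coeff φ x ∈ M.coeffSpace :=
  Submodule.apply_mem_map₂ _ trivial trivial

theorem coeffSpace_le_iff {M : Comod k H} {C : Submodule k H} :
    M.coeffSpace ≤ C ↔ ∀ φ x, M.coeff φ x ∈ C := by
  simp [coeffSpace, Submodule.map₂_le]

instance (M : Comod k H) [FiniteDimensional k M.X] : FiniteDimensional k M.coeffSpace :=
  Finite.iff_fg.2 (Finite.fg_top.map₂ _ Finite.fg_top)

theorem IsHom.coeff_apply {M N : Comod k H} {f : M.X →ₗ[k] N.X} (hf : IsHom M N f)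
    (φ : Dual k N.X) (x : M.X) : N.coeff φ (f x) = M.coeff (φ ∘ₗ f) x := by
  rw [Comod.coeff_apply, Comod.coeff_apply, hf.apply, rTensor_comp_apply]

theorem IsHom.coeffSpace_le_of_surjective {M N : Comod k H} {f : M.X →ₗ[k] N.X}
    (hf : IsHom M N f) (hsurj : Function.Surjective f) : N.coeffSpace ≤ M.coeffSpace := by
  refine coeffSpace_le_iff.2 fun φ y => ?_
  obtain ⟨x, rfl⟩ := hsurj y
  exact hf.coeff_apply φ x ▸ M.coeff_mem_coeffSpace _ x

theorem coeff_tensor (M N : Comod k H) (φ : Dual k M.X) (ψ : Dual k N.X) (x : M.X) (y : N.X) :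
    (M.tensor N).coeff (TensorProduct.dualDistrib k M.X N.X (φ ⊗ₜ ψ)) (x ⊗ₜ y) =
      M.coeff φ x * N.coeff ψ y := by
  have contract_mul :
      (TensorProduct.lid k H).toLinearMap ∘ₗ
        (TensorProduct.dualDistrib k M.X N.X (φ ⊗ₜ ψ)).rTensor H ∘ₗ
        (mul' k H).lTensor (M.X ⊗[k] N.X) ∘ₗ
        (TensorProduct.tensorTensorTensorComm k M.X H N.X H).toLinearMap =
      mul' k H ∘ₗ TensorProduct.map
        ((TensorProduct.lid k H).toLinearMap ∘ₗ φ.rTensor H)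
        ((TensorProduct.lid k H).toLinearMap ∘ₗ ψ.rTensor H) := by
    ext m g n h
    simp [smul_smul, mul_comm]
  exact LinearMap.congr_fun contract_mul (M.ρ x ⊗ₜ N.ρ y)

theorem coeffSpace_tensor_le (M N : Comod k H) [FiniteDimensional k M.X]
    [FiniteDimensional k N.X] :
    (M.tensor N).coeffSpace ≤ M.coeffSpace * N.coeffSpace := by
  let pairing : Dual k M.X ⊗[k] Dual k N.X →ₗ[k] M.X ⊗[k] N.X →ₗ[k] H :=
    (M.tensor N).coeff ∘ₗ TensorProduct.dualDistrib k M.X N.X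
  have pairing_mem (t : Dual k M.X ⊗[k] Dual k N.X) (z : M.X ⊗[k] N.X) :
      pairing t z ∈ M.coeffSpace * N.coeffSpace := by
    induction t with
    | zero => simp
    | add s t hs ht => simpa only [map_add, LinearMap.add_apply] using add_mem hs ht
    | tmul φ ψ =>
      induction z with
      | zero => simp
      | add y z hy hz => simpa only [map_add] using add_mem hy hz
      | tmul x y =>
        exact coeff_tensor M N φ ψ x y ▸
          Submodule.mul_mem_mul (M.coeff_mem_coeffSpace φ x) (N.coeff_mem_coeffSpace ψ y)
  refine coeffSpace_le_iff.2 fun θ z => ?_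
  obtain ⟨t, rfl⟩ := (TensorProduct.dualDistribEquiv k M.X N.X).surjective θ
  exact pairing_mem t z

theorem IsComodule.counit_coeff {M : Comod k H} (hM : M.IsComodule) (φ : Dual k M.X) (x : M.X) :
    Coalgebra.counit (R := k) (M.coeff φ x) = φ x := by
  have contract_counit :
      Coalgebra.counit (R := k) ∘ₗ (TensorProduct.lid k H).toLinearMap ∘ₗ φ.rTensor H =
        φ ∘ₗ (TensorProduct.rid k M.X).toLinearMap ∘ₗ
          (Coalgebra.counit (R := k) (A := H)).lTensor M.X := by
    ext m h
    simp [mul_comm]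
  calc Coalgebra.counit (R := k) (M.coeff φ x)
      = φ (TensorProduct.rid k M.X ((Coalgebra.counit (R := k)).lTensor M.X (M.ρ x))) :=
        LinearMap.congr_fun contract_counit (M.ρ x)
    _ = φ x := congrArg φ (LinearMap.congr_fun hM.2 x)

theorem IsComodule.isHom_coeff {M : Comod k H} (hM : M.IsComodule) (φ : Dual k M.X) :
    IsHom M (regular k H) (M.coeff φ) := by
  have contract_comul :
      Coalgebra.comul (R := k) ∘ₗ (TensorProduct.lid k H).toLinearMap ∘ₗ φ.rTensor H =
        ((TensorProduct.lid k H).toLinearMap ∘ₗ φ.rTensor H).rTensor H ∘ₗ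
          (TensorProduct.assoc k M.X H H).symm.toLinearMap ∘ₗ
          (Coalgebra.comul (R := k) (A := H)).lTensor M.X := by
    refine TensorProduct.ext' fun m h => ?_
    simp only [comp_apply, lTensor_tmul, rTensor_tmul, LinearEquiv.coe_coe,
      TensorProduct.lid_tmul, map_smul]
    induction Coalgebra.comul (R := k) h with
    | zero => simp
    | add s t hs ht => simp only [TensorProduct.tmul_add, map_add, smul_add, hs, ht]
    | tmul a b => simp [TensorProduct.smul_tmul']
  refine LinearMap.ext fun x => ?_
  calc Coalgebra.comul (R := k) (M.coeff φ x)
      = ((TensorProduct.lid k H).toLinearMap ∘ₗ φ.rTensor H).rTensor H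
          ((TensorProduct.assoc k M.X H H).symm
            ((Coalgebra.comul (R := k)).lTensor M.X (M.ρ x))) :=
        LinearMap.congr_fun contract_comul (M.ρ x)
    _ = ((TensorProduct.lid k H).toLinearMap ∘ₗ φ.rTensor H).rTensor H
          (M.ρ.rTensor H (M.ρ x)) :=
        congrArg _ (LinearMap.congr_fun hM.1 x).symm
    _ = (M.coeff φ).rTensor H (M.ρ x) := (rTensor_comp_apply ..).symm

theorem IsSimple.finrank_le_finrank_coeffSpace {M : Comod k H} (hM : M.IsSimple) :
    finrank k M.X ≤ finrank k M.coeffSpace := by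
  have := hM.2.1
  have := hM.2.2.1
  obtain ⟨φ, hφ⟩ := exists_ne (0 : Dual k M.X)
  have hcoeff : M.coeff φ ≠ 0 := fun h =>
    hφ <| LinearMap.ext fun x => by simp [← hM.1.counit_coeff, h]
  have hinj := (hM.1.isHom_coeff φ).injective_of_isSimple hM hcoeff
  exact finrank_le_finrank_of_injective
    (f := (M.coeff φ).codRestrict _ (M.coeff_mem_coeffSpace φ)) (hinj.codRestrict _)

end Coefficients

section Fusion

theorem finrank_add_eq_of_tensor_iso_dsum {M N P Q : Comod k H} [FiniteDimensional k P.X]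
    [FiniteDimensional k Q.X] (h : Iso (M.tensor N) (P.dsum Q)) :
    finrank k P.X + finrank k Q.X = finrank k M.X * finrank k N.X := by
  rw [← finrank_dsum, ← h.finrank_eq, finrank_tensor]

theorem coeffSpace_le_mul_of_tensor_iso_dsum {M N P Q : Comod k H} [FiniteDimensional k M.X]
    [FiniteDimensional k N.X] (h : Iso (M.tensor N) (P.dsum Q)) :
    P.coeffSpace ≤ M.coeffSpace * N.coeffSpace := by
  obtain ⟨e, he⟩ := h
  have hsurj : Function.Surjective (fst k P.X Q.X ∘ₗ e.toLinearMap) :=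
    Prod.fst_surjective.comp e.surjective
  exact (((isHom_fst P Q).comp he).coeffSpace_le_of_surjective hsurj).trans
    (coeffSpace_tensor_le M N)

theorem coeffSpace_le_pow_of_fusion {S : ℕ → Comod k H} [∀ n, FiniteDimensional k (S n).X]
    (hfus : ∀ n, Iso ((S 1).tensor (S (n + 1))) ((S (n + 2)).dsum (S n))) (n : ℕ) :
    (S (n + 1)).coeffSpace ≤ (S 1).coeffSpace ^ (n + 1) := by
  induction n with
  | zero => rw [zero_add, pow_one]
  | succ n ih =>
    calc (S (n + 2)).coeffSpace
        ≤ (S 1).coeffSpace * (S (n + 1)).coeffSpace :=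
          coeffSpace_le_mul_of_tensor_iso_dsum (hfus n)
      _ ≤ (S 1).coeffSpace * (S 1).coeffSpace ^ (n + 1) := mul_le_mul_right ih _
      _ = (S 1).coeffSpace ^ (n + 2) := (pow_succ' _ _).symm

theorem pow_le_finrank_of_fusion {S : ℕ → Comod k H} [∀ n, FiniteDimensional k (S n).X] {c : ℕ}
    (hunit : Iso (S 0) (unit k H)) (hfund : finrank k (S 1).X = c + 1)
    (hfus : ∀ n, Iso ((S 1).tensor (S (n + 1))) ((S (n + 2)).dsum (S n))) (n : ℕ) :
    c ^ n ≤ finrank k (S n).X := by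
  have h₀ : finrank k (S 0).X = 1 := hunit.finrank_eq.trans finrank_unit
  have hrec (n : ℕ) : finrank k (S (n + 2)).X + finrank k (S n).X =
      (c + 1) * finrank k (S (n + 1)).X :=
    hfund ▸ finrank_add_eq_of_tensor_iso_dsum (hfus n)
  have hstep := mul_le_succ_of_add_eq_succ_mul (a := fun n => finrank k (S n).X)
    (by simp [h₀, hfund]) hrec
  simpa only [h₀, mul_one] using pow_mul_le_of_mul_le_succ hstep n

end Fusion

end Comod

theorem stmt10_general {k : Type} [Field k] {H : Type} [Ring H] [HopfAlgebra k H]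
    (S : ℕ → Comod k H) (hsimple : ∀ n, (S n).IsSimple)
    (hunit : Comod.Iso (S 0) (Comod.unit k H))
    (hfund : 2 < Module.finrank k (S 1).X)
    (hfus : ∀ n, Comod.Iso ((S 1).tensor (S (n + 1))) ((S (n + 2)).dsum (S n))) :
    GKdim k H = ⊤ := by
  have hfin (n : ℕ) : FiniteDimensional k (S n).X := (hsimple n).2.2.1
  obtain ⟨c, hc⟩ : ∃ c, Module.finrank k (S 1).X = c + 1 := Nat.exists_eq_add_one.2 (by omega)
  refine GKdim_eq_top_of_pow_le (S 1).coeffSpace (c := c) (by norm_cast; omega) ?_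
  filter_upwards [Filter.eventually_ge_atTop 1] with n hn
  obtain ⟨m, rfl⟩ := Nat.exists_eq_add_of_le' hn
  have : FiniteDimensional k ↥((S 1).coeffSpace ^ (m + 1)) :=
    Module.Finite.iff_fg.2 ((Module.Finite.iff_fg.1 inferInstance).pow _)
  exact_mod_cast calc
    c ^ (m + 1) ≤ Module.finrank k (S (m + 1)).X :=
      Comod.pow_le_finrank_of_fusion hunit hc hfus _
    _ ≤ Module.finrank k (S (m + 1)).coeffSpace := (hsimple _).finrank_le_finrank_coeffSpace
    _ ≤ Module.finrank k ↥((S 1).coeffSpace ^ (m + 1)) :=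
      Submodule.finrank_mono (Comod.coeffSpace_le_pow_of_fusion hfus m)

/-- Example 3.9 of the paper, case `d > 2`.  Let
`E ∈ GL_d(ℂ)` with `d > 2` be such that the solutions `q` of
`q² + tr(EᵀE⁻¹)q + 1 = 0` are generic (`q = ±1` or not a root of unity), and
let `B = B(E)` be the Dubois-Violette-Launer quantum automorphism group of the
bilinear form `E`: a finitely generated cosemisimple Hopf algebra whose
comodule theory is that of `O_q(SL(2))` — its simple comodules are
`S_0 = 𝟏, S_1, S_2, …` (every simple comodule isomorphic to exactly one `S_n`)
with Clebsch-Gordan fusion `S_1 ⊗ S_{n+1} ≅ S_{n+2} ⊕ S_n`, where `S_1` is the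
fundamental `d`-dimensional comodule `V` (so the semiring isomorphism
`R_+(B(E)) ≅ R_+(O_q(SL(2)))` sends `[V]` to the `2`-dimensional fundamental
class).  Then `GKdim B(E) = ∞`. -/
theorem stmt10 (d : ℕ) (hd : 2 < d)
    (E : Matrix (Fin d) (Fin d) ℂ) (hE : IsUnit E)
    (q : ℂ) (hq : q ^ 2 + (E.transpose * E⁻¹).trace * q + 1 = 0)
    (hgen : q = 1 ∨ q = -1 ∨ ∀ n : ℕ, 0 < n → q ^ n ≠ 1)
    (B : Type) [Ring B] [HopfAlgebra ℂ B]
    (hfg : Algebra.FiniteType ℂ B) (hcss : IsCosemisimple ℂ B)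
    (S : ℕ → Comod ℂ B)
    (hsimple : ∀ n, (S n).IsSimple)
    (hcomplete : ∀ M : Comod ℂ B, M.IsSimple → ∃ n, Comod.Iso M (S n))
    (hdistinct : ∀ n m, Comod.Iso (S n) (S m) → n = m)
    (hunit : Comod.Iso (S 0) (Comod.unit ℂ B))
    (hfund : Module.finrank ℂ (S 1).X = d)
    (hfus : ∀ n, Comod.Iso ((S 1).tensor (S (n + 1))) ((S (n + 2)).dsum (S n))) :
    GKdim ℂ B = ⊤ :=
  stmt10_general S hsimple hunit (hfund ▸ hd) hfus
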